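/- arXiv:1907.12403 — 2 statements merged into one kernel-verified Lean document; each statement's English description precedes it below -/
import Mathlib

section
/- For the noiseless closed-loop Markov jump linear system with one time-step delayed mode observations, the indicator-weighted second moments satisfy, for every k ≥ 0 and all 1 ≤ i, j ≤ N: M_{ij}^{(k+1)} = (A (Σ_{ℓ=1}^N M_{ℓi}^{(k)}) A^* + ν̂_i · B (Σ_ℓ K_ℓ M_{ℓi}^{(k)} K_ℓ^*) B^* + ν̂_i · A (Σ_ℓ M_{ℓi}^{(k)} K_ℓ^*) B^* + ν̂_i · B (Σ_ℓ K_ℓ M_{ℓi}^{(k)}) A^*) · p_{ij}. -/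
/-!
Write `Φ b ℓ = A + b • B K_ℓ`, so that `x_{k+1} = Φ(ν_k, θ_{k-1}) x_k`. The state `x_k` is a function
of `θ_{-1}, …, θ_{k-2}` and `ν_0, …, ν_{k-1}`, hence it is measurable with respect to the past
σ-algebra `pastSig θ ν k`, and it takes only finitely many values, so that every function of
it below is integrable.

The Markov hypothesis says that, on the past σ-algebra, the measure `μ` restricted to
`{θ_{k+1} = j, ν_k = b, θ_k = i}` is `p_{ij} w_b` times `μ` restricted to `{θ_k = i}`, where
`w_1 = ν̂_i` and `w_0 = 1 - ν̂_i`. The same proportionality therefore holds for integrals of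
past-measurable functions (`setIntegral_past`). Splitting `{θ_{k+1} = j, θ_k = i}` according to `ν_k`,
applying this to the entries of `x_{k+1} x_{k+1}^*`, and splitting `{θ_k = i}` according to
`θ_{k-1}` gives `M_{ij}^{(k+1)} = p_{ij} Σ_b w_b Σ_ℓ Φ_{bℓ} M_{ℓi}^{(k)} Φ_{bℓ}^*`; expanding the
products gives the claim.
-/

open MeasureTheory Matrix ProbabilityTheory Filter
open scoped BigOperators ComplexOrder

noncomputable section

/-- The canonical ring homomorphism from an `RCLike` field (`ℝ` or `ℂ`) to `ℂ`. -/
def rcToComplex (𝕜 : Type*) [RCLike 𝕜] : 𝕜 →+* ℂ where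
  toFun z := ⟨RCLike.re z, RCLike.im z⟩
  map_one' := by simp [Complex.ext_iff]
  map_mul' z w := by simp [Complex.ext_iff, RCLike.mul_re, RCLike.mul_im]
  map_zero' := by simp [Complex.ext_iff]
  map_add' z w := by simp [Complex.ext_iff]

/-- Spectral radius of a complex square matrix: the largest absolute value of its
(complex) eigenvalues. -/
def specRad {n : Type*} [Fintype n] [DecidableEq n] (M : Matrix n n ℂ) : ℝ :=
  sSup ((fun z => ‖z‖) '' spectrum ℂ M)

/-- Spectral radius of a square matrix over `ℝ` or `ℂ`, computed over `ℂ`. -/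
def specRadK {𝕜 : Type*} [RCLike 𝕜] {n : Type*} [Fintype n] [DecidableEq n]
    (M : Matrix n n 𝕜) : ℝ :=
  specRad (M.map (rcToComplex 𝕜))

variable {𝕜 : Type*} [RCLike 𝕜]

/-- `vec²` of an `N × N` array of `n_x × n_x` blocks `S = [S_{ℓi}]` (block `S ℓ i` sits in
block-row `ℓ` and block-column `i`): the index `((i, ℓ), (c, r))` addresses the entry in row `r`
and column `c` of the block `S_{ℓ i}`, corresponding to the stacking
`vec(S₁₁),…,vec(S_{N1}), vec(S₁₂),…,vec(S_{NN})` with column-major `vec`. -/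
def vec2 {N nx : ℕ} (S : Fin N → Fin N → Matrix (Fin nx) (Fin nx) 𝕜) :
    (Fin N × Fin N) × Fin nx × Fin nx → 𝕜 :=
  fun q => S q.1.2 q.1.1 q.2.2 q.2.1

/-- `vec²` of an `N × N` array of vectors in `𝕜^{n_x}`. -/
def vec2v {N nx : ℕ} (m : Fin N → Fin N → (Fin nx → 𝕜)) :
    (Fin N × Fin N) × Fin nx → 𝕜 :=
  fun q => m q.1.2 q.1.1 q.2

/-- The operator `L`, blockwise: `L_{ij}(S)`. -/
def Lop {N nx nu : ℕ} (A : Matrix (Fin nx) (Fin nx) 𝕜) (B : Matrix (Fin nx) (Fin nu) 𝕜)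
    (K : Fin N → Matrix (Fin nu) (Fin nx) 𝕜) (p : Fin N → Fin N → ℝ) (νh : Fin N → ℝ)
    (S : Fin N → Fin N → Matrix (Fin nx) (Fin nx) 𝕜) (i j : Fin N) :
    Matrix (Fin nx) (Fin nx) 𝕜 :=
  ((p i j : ℝ) : 𝕜) •
    (A * (∑ ℓ, S ℓ i) * Aᴴ
      + ((νh i : ℝ) : 𝕜) • (B * (∑ ℓ, K ℓ * S ℓ i * (K ℓ)ᴴ) * Bᴴ)
      + ((νh i : ℝ) : 𝕜) • (A * (∑ ℓ, S ℓ i * (K ℓ)ᴴ) * Bᴴ)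
      + ((νh i : ℝ) : 𝕜) • (B * (∑ ℓ, K ℓ * S ℓ i) * Aᴴ))

/-- The operator `T`, blockwise: `T_{ℓi}(S)`. -/
def Tadj {N nx nu : ℕ} (A : Matrix (Fin nx) (Fin nx) 𝕜) (B : Matrix (Fin nx) (Fin nu) 𝕜)
    (K : Fin N → Matrix (Fin nu) (Fin nx) 𝕜) (p : Fin N → Fin N → ℝ) (νh : Fin N → ℝ)
    (S : Fin N → Fin N → Matrix (Fin nx) (Fin nx) 𝕜) (ℓ i : Fin N) :
    Matrix (Fin nx) (Fin nx) 𝕜 :=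
  Aᴴ * (∑ j, ((p i j : ℝ) : 𝕜) • S i j) * A
    + ((νh i : ℝ) : 𝕜) • ((K ℓ)ᴴ * Bᴴ * (∑ j, ((p i j : ℝ) : 𝕜) • S i j) * (B * K ℓ))
    + ((νh i : ℝ) : 𝕜) • ((K ℓ)ᴴ * Bᴴ * (∑ j, ((p i j : ℝ) : 𝕜) • S i j) * A)
    + ((νh i : ℝ) : 𝕜) • (Aᴴ * (∑ j, ((p i j : ℝ) : 𝕜) • S i j) * (B * K ℓ))

/-- σ-algebra of the "past" at time `k`: generated by `θ_{-1},…,θ_{k-1}` and `ν_0,…,ν_{k-1}`. -/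
def pastSig {Ω : Type*} {N : ℕ} (θ : ℤ → Ω → Fin N) (ν : ℕ → Ω → Bool) (k : ℕ) :
    MeasurableSpace Ω :=
  (⨆ t : ℤ, ⨆ (_ : -1 ≤ t), ⨆ (_ : t < (k : ℤ)), MeasurableSpace.comap (θ t) ⊤) ⊔
    ⨆ t : ℕ, ⨆ (_ : t < k), MeasurableSpace.comap (ν t) ⊤

/-- σ-algebra generated by `θ_{-1},…,θ_{k-1}`. -/
def pastTheta {Ω : Type*} {N : ℕ} (θ : ℤ → Ω → Fin N) (k : ℤ) : MeasurableSpace Ω :=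
  ⨆ t : ℤ, ⨆ (_ : -1 ≤ t), ⨆ (_ : t < k), MeasurableSpace.comap (θ t) ⊤

/-- σ-algebra generated by the pairs `(θ_t, θ_{t-1})` for `0 ≤ t ≤ k-1`. -/
def pastPair {Ω : Type*} {N : ℕ} (θ : ℤ → Ω → Fin N) (k : ℕ) : MeasurableSpace Ω :=
  ⨆ t : ℕ, ⨆ (_ : t < k),
    MeasurableSpace.comap (fun ω => (θ (t : ℤ) ω, θ ((t : ℤ) - 1) ω)) ⊤

/-- Indicator-weighted first moment `m_{ℓi}^{(k)} = E[x_k 1_{θ_k = i, θ_{k-1} = ℓ}]`. -/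
def mMom {Ω : Type*} [MeasurableSpace Ω] (μ : Measure Ω) {N nx : ℕ}
    (θ : ℤ → Ω → Fin N) (x : ℕ → Ω → Fin nx → 𝕜) (k : ℕ) (ℓ i : Fin N) : Fin nx → 𝕜 :=
  fun r => ∫ ω in {ω | θ (k : ℤ) ω = i ∧ θ ((k : ℤ) - 1) ω = ℓ}, x k ω r ∂μ

/-- Indicator-weighted second moment `M_{ℓi}^{(k)} = E[x_k x_k^* 1_{θ_k = i, θ_{k-1} = ℓ}]`. -/
def MMom {Ω : Type*} [MeasurableSpace Ω] (μ : Measure Ω) {N nx : ℕ}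
    (θ : ℤ → Ω → Fin N) (x : ℕ → Ω → Fin nx → 𝕜) (k : ℕ) (ℓ i : Fin N) :
    Matrix (Fin nx) (Fin nx) 𝕜 :=
  Matrix.of fun r c =>
    ∫ ω in {ω | θ (k : ℤ) ω = i ∧ θ ((k : ℤ) - 1) ω = ℓ}, x k ω r * star (x k ω c) ∂μ

/-- Joint probability `π_{ℓi}^{(k)} = Pr(θ_k = i, θ_{k-1} = ℓ)`. -/
def piP {Ω : Type*} [MeasurableSpace Ω] (μ : Measure Ω) {N : ℕ}
    (θ : ℤ → Ω → Fin N) (k : ℕ) (ℓ i : Fin N) : ℝ :=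
  (μ {ω | θ (k : ℤ) ω = i ∧ θ ((k : ℤ) - 1) ω = ℓ}).toReal

/-- A measure on a real vector space is Gaussian if every real-linear functional pushes it
forward to a one-dimensional Gaussian law. -/
def IsGaussianLaw {E : Type*} [AddCommGroup E] [Module ℝ E] [MeasurableSpace E]
    (γ : Measure E) : Prop :=
  ∀ L : E →ₗ[ℝ] ℝ, ∃ (m : ℝ) (v : NNReal), γ.map L = ProbabilityTheory.gaussianReal m v

section SecondMoment

variable {Ω : Type*} {N nx : ℕ}

lemma measurable_theta_pastSig (θ : ℤ → Ω → Fin N) (ν : ℕ → Ω → Bool) (k : ℕ) (t : ℤ)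
    (h1 : -1 ≤ t) (h2 : t < k) : Measurable[pastSig θ ν k] (θ t) := by
  rw [measurable_iff_comap_le]
  refine le_trans ?_ le_sup_left
  exact le_iSup_of_le t (le_iSup_of_le h1 (le_iSup_of_le h2 le_rfl))

lemma measurable_nu_pastSig (θ : ℤ → Ω → Fin N) (ν : ℕ → Ω → Bool) (k : ℕ) (t : ℕ)
    (h : t < k) : Measurable[pastSig θ ν k] (ν t) := by
  rw [measurable_iff_comap_le]
  refine le_trans ?_ le_sup_right
  exact le_iSup_of_le t (le_iSup_of_le h le_rfl)

lemma pastSig_mono (θ : ℤ → Ω → Fin N) (ν : ℕ → Ω → Bool) (k : ℕ) :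
    pastSig θ ν k ≤ pastSig θ ν (k + 1) := by
  refine sup_le ?_ ?_
  · refine iSup_le fun t => iSup_le fun h1 => iSup_le fun h2 => ?_
    exact (measurable_theta_pastSig θ ν (k + 1) t h1 (by push_cast; omega)).comap_le
  · refine iSup_le fun t => iSup_le fun h => ?_
    exact (measurable_nu_pastSig θ ν (k + 1) t (by omega)).comap_le

lemma pastSig_le [m0 : MeasurableSpace Ω] (θ : ℤ → Ω → Fin N) (hθ : ∀ t, Measurable (θ t))
    (ν : ℕ → Ω → Bool) (hν : ∀ t, Measurable (ν t)) (k : ℕ) : pastSig θ ν k ≤ m0 := by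
  refine sup_le ?_ ?_
  · exact iSup_le fun t => iSup_le fun _ => iSup_le fun _ => (hθ t).comap_le
  · exact iSup_le fun t => iSup_le fun _ => (hν t).comap_le

/-- A matrix depending on a discrete past-measurable variable, applied to a past-measurable vector,
is past-measurable. -/
lemma stronglyMeasurable_mulVec {m : MeasurableSpace Ω} {α : Type*} [MeasurableSpace α]
    [DiscreteMeasurableSpace α] [Countable α]
    (Φ : α → Matrix (Fin nx) (Fin nx) 𝕜) (a : Ω → α) (ha : Measurable[m] a)
    (y : Ω → Fin nx → 𝕜) (hy : ∀ r, StronglyMeasurable[m] fun ω => y ω r) (r : Fin nx) :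
    StronglyMeasurable[m] fun ω => (Φ (a ω) *ᵥ y ω) r := by
  simp only [Matrix.mulVec, dotProduct]
  refine Finset.stronglyMeasurable_fun_sum _ fun c _ => StronglyMeasurable.mul ?_ (hy c)
  have h : StronglyMeasurable fun z : α => Φ z r c := .of_discrete
  exact h.comp_measurable ha

lemma stronglyMeasurable_state
    (Φ : Bool → Fin N → Matrix (Fin nx) (Fin nx) 𝕜) (θ : ℤ → Ω → Fin N) (ν : ℕ → Ω → Bool)
    (x0 : Fin nx → 𝕜) (x : ℕ → Ω → Fin nx → 𝕜) (hx0 : ∀ ω, x 0 ω = x0)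
    (hx : ∀ k ω, x (k + 1) ω = Φ (ν k ω) (θ ((k : ℤ) - 1) ω) *ᵥ x k ω)
    (k : ℕ) (r : Fin nx) :
    StronglyMeasurable[pastSig θ ν k] fun ω => x k ω r := by
  induction k generalizing r with
  | zero => simp only [hx0]; exact stronglyMeasurable_const
  | succ k ih =>
    simp only [hx]
    refine stronglyMeasurable_mulVec (fun z : Bool × Fin N => Φ z.1 z.2)
      (fun ω => (ν k ω, θ ((k : ℤ) - 1) ω)) ?_ _ (fun r => (ih r).mono (pastSig_mono θ ν k)) r
    exact (measurable_nu_pastSig θ ν (k + 1) k (by omega)).prodMk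
      (measurable_theta_pastSig θ ν (k + 1) _ (by omega) (by push_cast; omega))

lemma finite_range_state
    (Φ : Bool → Fin N → Matrix (Fin nx) (Fin nx) 𝕜) (θ : ℤ → Ω → Fin N) (ν : ℕ → Ω → Bool)
    (x0 : Fin nx → 𝕜) (x : ℕ → Ω → Fin nx → 𝕜) (hx0 : ∀ ω, x 0 ω = x0)
    (hx : ∀ k ω, x (k + 1) ω = Φ (ν k ω) (θ ((k : ℤ) - 1) ω) *ᵥ x k ω)
    (k : ℕ) : (Set.range (x k)).Finite := by
  induction k with
  | zero =>
    refine (Set.finite_singleton x0).subset ?_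
    rintro _ ⟨ω, rfl⟩
    exact hx0 ω
  | succ k ih =>
    refine ((Set.finite_univ (α := Bool × Fin N)).image2 (fun z y => Φ z.1 z.2 *ᵥ y) ih).subset ?_
    rintro _ ⟨ω, rfl⟩
    exact ⟨(ν k ω, θ ((k : ℤ) - 1) ω), trivial, x k ω, ⟨ω, rfl⟩, (hx k ω).symm⟩

lemma integrable_state_mul_star [MeasurableSpace Ω]
    (Φ : Bool → Fin N → Matrix (Fin nx) (Fin nx) 𝕜) (θ : ℤ → Ω → Fin N) (ν : ℕ → Ω → Bool)
    (x0 : Fin nx → 𝕜) (x : ℕ → Ω → Fin nx → 𝕜) (hx0 : ∀ ω, x 0 ω = x0)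
    (hx : ∀ k ω, x (k + 1) ω = Φ (ν k ω) (θ ((k : ℤ) - 1) ω) *ᵥ x k ω)
    (μ : Measure Ω) [IsFiniteMeasure μ]
    (hθ : ∀ t, Measurable (θ t)) (hν : ∀ t, Measurable (ν t)) (k : ℕ) (r c : Fin nx) :
    Integrable (fun ω => x k ω r * star (x k ω c)) μ := by
  have hm := fun r => (stronglyMeasurable_state Φ θ ν x0 x hx0 hx k r).mono (pastSig_le θ hθ ν hν k)
  obtain ⟨C, hC⟩ := ((finite_range_state Φ θ ν x0 x hx0 hx k).image
    fun y => ‖y r * star (y c)‖).bddAbove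
  refine Integrable.of_bound ((hm r).mul (hm c).star).aestronglyMeasurable C (ae_of_all _ fun ω => ?_)
  exact hC ⟨x k ω, ⟨ω, rfl⟩, rfl⟩

/-- If `μ` restricted to `S` is `a` times `μ` restricted to `T` on the sets of a sub-σ-algebra,
then the same holds for integrals of functions measurable for that σ-algebra. -/
lemma setIntegral_past {m m0 : MeasurableSpace Ω} (hm : m ≤ m0) (μ : Measure Ω) [IsFiniteMeasure μ]
    {S T : Set Ω} {a : ℝ} (ha : 0 ≤ a)
    (h : ∀ E, MeasurableSet[m] E → (μ (S ∩ E)).toReal = a * (μ (T ∩ E)).toReal)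
    {f : Ω → 𝕜} (hf : StronglyMeasurable[m] f) :
    ∫ ω in S, f ω ∂μ = (a : 𝕜) * ∫ ω in T, f ω ∂μ := by
  have key : (μ.restrict S).trim hm = ENNReal.ofReal a • (μ.restrict T).trim hm := by
    refine @Measure.ext _ m _ _ fun E hE => ?_
    rw [Measure.smul_apply, trim_measurableSet_eq hm hE, trim_measurableSet_eq hm hE,
      Measure.restrict_apply (hm _ hE), Measure.restrict_apply (hm _ hE), smul_eq_mul,
      Set.inter_comm E, Set.inter_comm E,
      ← ENNReal.toReal_eq_toReal_iff' (measure_ne_top _ _)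
        (ENNReal.mul_ne_top ENNReal.ofReal_ne_top (measure_ne_top _ _)),
      ENNReal.toReal_mul, ENNReal.toReal_ofReal ha]
    exact h E hE
  rw [integral_trim hm hf, key, integral_smul_measure, ← integral_trim hm hf,
    ENNReal.toReal_ofReal ha, RCLike.real_smul_eq_coe_mul]

/-- The integral of the `(r, c)` entry of `(Ψ y)(Ψ y)^*` is the entry of `Ψ M Ψ^*`, where `M` is the
matrix of integrals of the entries of `y y^*`. -/
lemma integral_mulVec_mul_star [MeasurableSpace Ω] (μ : Measure Ω)
    (Ψ : Matrix (Fin nx) (Fin nx) 𝕜) (y : Ω → Fin nx → 𝕜)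
    (hy : ∀ r c, Integrable (fun ω => y ω r * star (y ω c)) μ) (r c : Fin nx) :
    Integrable (fun ω => (Ψ *ᵥ y ω) r * star ((Ψ *ᵥ y ω) c)) μ ∧
    ∫ ω, (Ψ *ᵥ y ω) r * star ((Ψ *ᵥ y ω) c) ∂μ
      = (Ψ * (Matrix.of fun r c => ∫ ω, y ω r * star (y ω c) ∂μ) * Ψᴴ) r c := by
  have e : (fun ω => (Ψ *ᵥ y ω) r * star ((Ψ *ᵥ y ω) c)) = fun ω =>
      ∑ d, ∑ b, Ψ r b * star (Ψ c d) * (y ω b * star (y ω d)) := by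
    ext ω
    simp only [Matrix.mulVec, dotProduct, star_sum, star_mul', Finset.sum_mul_sum]
    rw [Finset.sum_comm]
    exact Finset.sum_congr rfl fun _ _ => Finset.sum_congr rfl fun _ _ => by ring
  have hi : ∀ b d, Integrable (fun ω => Ψ r b * star (Ψ c d) * (y ω b * star (y ω d))) μ :=
    fun b d => (hy b d).const_mul _
  rw [e]
  refine ⟨integrable_finsetSum _ fun d _ => integrable_finsetSum _ fun b _ => hi b d, ?_⟩
  rw [integral_finsetSum _ fun d _ => integrable_finsetSum _ fun b _ => hi b d]
  simp only [Matrix.mul_apply, Finset.sum_mul, Matrix.of_apply, Matrix.conjTranspose_apply]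
  refine Finset.sum_congr rfl fun d _ => ?_
  rw [integral_finsetSum _ fun b _ => hi b d]
  refine Finset.sum_congr rfl fun b _ => ?_
  rw [integral_const_mul]
  ring

/-- Splitting a set integral according to the value of a discrete random variable, whose value may
then be substituted in the integrand. -/
lemma setIntegral_eq_sum_fiber [MeasurableSpace Ω] (μ : Measure Ω) {α : Type*} [Fintype α]
    [MeasurableSpace α] [MeasurableSingletonClass α] (a : Ω → α) (ha : Measurable a)
    {S : Set Ω} (hS : MeasurableSet S) (G : α → Ω → 𝕜)
    (hG : ∀ z, IntegrableOn (G z) (S ∩ {ω | a ω = z}) μ) :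
    ∫ ω in S, G (a ω) ω ∂μ = ∑ z, ∫ ω in S ∩ {ω | a ω = z}, G z ω ∂μ := by
  have hm : ∀ z, MeasurableSet (S ∩ {ω | a ω = z}) :=
    fun z => hS.inter (ha (measurableSet_singleton z))
  have hU : S = ⋃ z, S ∩ {ω | a ω = z} := by ext ω; simp
  have hc : ∀ z, Set.EqOn (fun ω => G (a ω) ω) (G z) (S ∩ {ω | a ω = z}) := by
    rintro z ω ⟨-, h⟩
    change a ω = z at h
    simp only [h]
  conv_lhs => rw [hU]
  rw [integral_iUnion_fintype hm]
  · exact Finset.sum_congr rfl fun z _ => setIntegral_congr_fun (hm z) (hc z)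
  · intro z w hzw
    refine Set.disjoint_left.2 ?_
    rintro ω ⟨-, h⟩ ⟨-, h'⟩
    exact hzw (h.symm.trans h')
  · exact fun z => (hG z).congr_fun (hc z).symm (hm z)

end SecondMoment

/-- Second-moment recursion for the noiseless closed-loop MJLS with one
time-step delayed mode observations. -/
theorem secondMoment_recursion
    {𝕜 : Type*} [RCLike 𝕜]
    {N nx nu : ℕ} (hN : 1 ≤ N) (hnx : 1 ≤ nx) (hnu : 1 ≤ nu)
    (A : Matrix (Fin nx) (Fin nx) 𝕜) (B : Matrix (Fin nx) (Fin nu) 𝕜)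
    (K : Fin N → Matrix (Fin nu) (Fin nx) 𝕜)
    (p : Fin N → Fin N → ℝ) (hp_nonneg : ∀ i j, 0 ≤ p i j) (hp_row : ∀ i, ∑ j, p i j = 1)
    (νh : Fin N → ℝ) (hνh : ∀ i, νh i ∈ Set.Icc (0 : ℝ) 1)
    {Ω : Type*} [MeasurableSpace Ω] (μ : Measure Ω) [IsProbabilityMeasure μ]
    (θ : ℤ → Ω → Fin N) (hθ : ∀ t, Measurable (θ t))
    (ν : ℕ → Ω → Bool) (hν : ∀ t, Measurable (ν t))
    (hMarkov : ∀ (k : ℕ) (i j : Fin N) (b : Bool) (E : Set Ω),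
      MeasurableSet[pastSig θ ν k] E →
      (μ ({ω | θ ((k : ℤ) + 1) ω = j ∧ ν k ω = b ∧ θ (k : ℤ) ω = i} ∩ E)).toReal
        = p i j * (if b then νh i else 1 - νh i) *
            (μ ({ω | θ (k : ℤ) ω = i} ∩ E)).toReal)
    (x0 : Fin nx → 𝕜) (x : ℕ → Ω → Fin nx → 𝕜)
    (hx0 : ∀ ω, x 0 ω = x0)
    (hxrec : ∀ (k : ℕ) (ω : Ω),
      x (k + 1) ω
        = Matrix.mulVec (A + (if ν k ω then (1 : 𝕜) else 0) • (B * K (θ ((k : ℤ) - 1) ω)))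
            (x k ω))
 :
    ∀ (k : ℕ) (i j : Fin N),
      MMom μ θ x (k + 1) i j
        = ((p i j : ℝ) : 𝕜) •
            (A * (∑ ℓ, MMom μ θ x k ℓ i) * Aᴴ
              + ((νh i : ℝ) : 𝕜) • (B * (∑ ℓ, K ℓ * MMom μ θ x k ℓ i * (K ℓ)ᴴ) * Bᴴ)
              + ((νh i : ℝ) : 𝕜) • (A * (∑ ℓ, MMom μ θ x k ℓ i * (K ℓ)ᴴ) * Bᴴ)
              + ((νh i : ℝ) : 𝕜) • (B * (∑ ℓ, K ℓ * MMom μ θ x k ℓ i) * Aᴴ)) := by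
  intro k i j
  set Φ : Bool → Fin N → Matrix (Fin nx) (Fin nx) 𝕜 :=
    fun b ℓ => A + (if b then (1 : 𝕜) else 0) • (B * K ℓ) with hΦ
  have hx : ∀ k ω, x (k + 1) ω = Φ (ν k ω) (θ ((k : ℤ) - 1) ω) *ᵥ x k ω := hxrec
  have hint := integrable_state_mul_star Φ θ ν x0 x hx0 hx μ hθ hν k
  have hle := pastSig_le θ hθ ν hν k
  have hset : ∀ t (l : Fin N), MeasurableSet {ω | θ t ω = l} :=
    fun t l => hθ t (measurableSet_singleton l)
  have hθp : Measurable[pastSig θ ν k] (θ ((k : ℤ) - 1)) :=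
    measurable_theta_pastSig θ ν k _ (by omega) (by omega)
  -- The integrand here is the entry of `x_{k+1} x_{k+1}^*` with `ν_k` replaced by the constant `b`;
  -- after this substitution it depends on the past only.
  have hGm : ∀ b r c, StronglyMeasurable[pastSig θ ν k] fun ω =>
      (Φ b (θ ((k : ℤ) - 1) ω) *ᵥ x k ω) r * star ((Φ b (θ ((k : ℤ) - 1) ω) *ᵥ x k ω) c) := by
    intro b r c
    have h := stronglyMeasurable_mulVec (Φ b) _ hθp (x k)
      (stronglyMeasurable_state Φ θ ν x0 x hx0 hx k)
    exact (h r).mul (continuous_star.comp_stronglyMeasurable (h c))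
  have hM : ∀ b r c, ∫ ω in {ω | θ (k : ℤ) ω = i},
      (Φ b (θ ((k : ℤ) - 1) ω) *ᵥ x k ω) r * star ((Φ b (θ ((k : ℤ) - 1) ω) *ᵥ x k ω) c) ∂μ
      = (∑ ℓ, Φ b ℓ * MMom μ θ x k ℓ i * (Φ b ℓ)ᴴ) r c := by
    intro b r c
    rw [setIntegral_eq_sum_fiber μ (θ ((k : ℤ) - 1)) (hθ _) (hset _ i)
      (fun ℓ ω => (Φ b ℓ *ᵥ x k ω) r * star ((Φ b ℓ *ᵥ x k ω) c))
      (fun ℓ => (integral_mulVec_mul_star μ (Φ b ℓ) (x k) hint r c).1.integrableOn),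
      Matrix.sum_apply]
    refine Finset.sum_congr rfl fun ℓ _ => ?_
    exact (integral_mulVec_mul_star _ (Φ b ℓ) (x k) (fun r c => (hint r c).integrableOn) r c).2
  have hGi : ∀ b r c, Integrable (fun ω =>
      (Φ b (θ ((k : ℤ) - 1) ω) *ᵥ x k ω) r * star ((Φ b (θ ((k : ℤ) - 1) ω) *ᵥ x k ω) c)) μ := by
    intro b r c
    have h : Integrable (fun ω => ∑ ℓ, {ω | θ ((k : ℤ) - 1) ω = ℓ}.indicator
        (fun ω => (Φ b ℓ *ᵥ x k ω) r * star ((Φ b ℓ *ᵥ x k ω) c)) ω) μ :=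
      integrable_finsetSum _ fun ℓ _ =>
        (integral_mulVec_mul_star μ (Φ b ℓ) (x k) hint r c).1.indicator (hset _ ℓ)
    refine h.congr (ae_of_all _ fun ω => ?_)
    simp [Set.indicator_apply]
  have hw : ∀ b : Bool, 0 ≤ p i j * (if b then νh i else 1 - νh i) := by
    intro b
    refine mul_nonneg (hp_nonneg i j) ?_
    split_ifs
    · exact (hνh i).1
    · linarith [(hνh i).2]
  have hmain : MMom μ θ x (k + 1) i j = ∑ b : Bool,
      ((p i j * (if b then νh i else 1 - νh i) : ℝ) : 𝕜) •
        ∑ ℓ, Φ b ℓ * MMom μ θ x k ℓ i * (Φ b ℓ)ᴴ := by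
    ext r c
    rw [Matrix.sum_apply]
    -- The index `(k + 1) - 1` in `MMom` is an integer subtraction, equal to `k`.
    have hS : {ω | θ ((k + 1 : ℕ) : ℤ) ω = j ∧ θ (((k + 1 : ℕ) : ℤ) - 1) ω = i}
        = {ω | θ ((k : ℤ) + 1) ω = j} ∩ {ω | θ (k : ℤ) ω = i} := by
      ext ω
      simp
    have hL : MMom μ θ x (k + 1) i j r c
        = ∫ ω in {ω | θ ((k : ℤ) + 1) ω = j} ∩ {ω | θ (k : ℤ) ω = i},
          (Φ (ν k ω) (θ ((k : ℤ) - 1) ω) *ᵥ x k ω) r *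
            star ((Φ (ν k ω) (θ ((k : ℤ) - 1) ω) *ᵥ x k ω) c) ∂μ := by
      simp only [MMom, Matrix.of_apply, hS, hx]
    rw [hL]
    rw [setIntegral_eq_sum_fiber μ (ν k) (hν k) ((hset _ j).inter (hset _ i))
      (fun b ω => (Φ b (θ ((k : ℤ) - 1) ω) *ᵥ x k ω) r *
        star ((Φ b (θ ((k : ℤ) - 1) ω) *ᵥ x k ω) c)) (fun b => (hGi b r c).integrableOn)]
    refine Finset.sum_congr rfl fun b _ => ?_
    have hS' : {ω | θ ((k : ℤ) + 1) ω = j} ∩ {ω | θ (k : ℤ) ω = i} ∩ {ω | ν k ω = b}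
        = {ω | θ ((k : ℤ) + 1) ω = j ∧ ν k ω = b ∧ θ (k : ℤ) ω = i} := by
      ext ω
      exact ⟨fun ⟨⟨h1, h2⟩, h3⟩ => ⟨h1, h3, h2⟩, fun ⟨h1, h3, h2⟩ => ⟨⟨h1, h2⟩, h3⟩⟩
    rw [hS', setIntegral_past hle μ (hw b) (hMarkov k i j b) (hGm b r c), hM, Matrix.smul_apply,
      smul_eq_mul]
  rw [hmain]
  simp only [hΦ, Fintype.sum_bool, if_true, Bool.false_eq_true, if_false, one_smul, zero_smul,
    add_zero, Matrix.conjTranspose_add, Matrix.conjTranspose_zero, Matrix.conjTranspose_mul,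
    Matrix.mul_sum, Matrix.sum_mul, Finset.smul_sum, ← Finset.sum_add_distrib, RCLike.ofReal_mul, RCLike.ofReal_sub,
    RCLike.ofReal_one]
  refine Finset.sum_congr rfl fun ℓ _ => ?_
  simp only [Matrix.add_mul, Matrix.mul_add, Matrix.mul_assoc]
  module
end
end

section
/- If the spectral radius of the second-moment transition matrix Λ is strictly less than 1, then the spectral radius of the first-moment transition matrix Ψ is strictly less than 1: ρ(Λ) < 1 implies ρ(Ψ) < 1. -/
/-!
Think of `m` and `S` as unnormalized first and second moments of a random vector on the events
that two successive states of the Markov chain are `(ℓ, i)`, and of `π` as the probabilities of these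
events. Cauchy–Schwarz gives `|w^* m|² ≤ π · w^* S w`. This inequality (`Dominated`) is
preserved by one step of the three coupled recursions (`dominated_step`): the operator `L` is a
nonnegative combination of congruences `S ↦ G S G^*`, the first-moment operator is the same
combination of the maps `m ↦ G m`, and the masses follow the same weights.

Starting from arbitrary blocks `m` with `S = m m^*` and `π = 1`, the total mass is conserved because
`P` is row-stochastic, so `|(Ψ^k m)|² ≤ N² |Λ^k S|` blockwise, entry against diagonal entry
(`norm_sq_iterate_le`). By Gelfand's formula `ρ(Λ) < 1` is equivalent to `Λ^k → 0`, and likewise for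
`Ψ` (`specRadK_lt_one_iff`); so `Λ^k → 0` yields `Ψ^k → 0`. Stating the equivalence for powers over
the field `𝕜` itself means that no complexification of the moment recursions is needed.
-/

open MeasureTheory Matrix ProbabilityTheory Filter
open scoped BigOperators ComplexOrder

noncomputable section

variable {𝕜 : Type*} [RCLike 𝕜]

/-! ### Spectral radius and powers -/

section Gelfand

attribute [local instance] Matrix.linftyOpNormedRing Matrix.linftyOpNormedAlgebra

/-- The topology of the operator norm is definitionally the entrywise one, but not reducibly so;
this lemma carries out the change of instance. -/
lemma matrix_tendsto_zero_iff {n : Type*} [Fintype n] [DecidableEq n] (f : ℕ → Matrix n n ℂ) :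
    Tendsto f atTop (@nhds _ instTopologicalSpaceMatrix 0) ↔
      Tendsto (fun k => ‖f k‖) atTop (nhds 0) :=
  tendsto_zero_iff_norm_tendsto_zero (E := Matrix n n ℂ)

/-- Gelfand's formula: the powers of a complex matrix of spectral radius `< 1` tend to zero. -/
lemma tendsto_pow_of_specRad_lt_one {n : Type*} [Fintype n] [DecidableEq n] [Nonempty n]
    (M : Matrix n n ℂ) (h : specRad M < 1) :
    Tendsto (fun k : ℕ => M ^ k) atTop (nhds 0) := by
  have hrad : spectralRadius ℂ M < 1 := by
    refine spectrum.spectralRadius_lt_of_forall_lt (r := 1) M fun z hz => ?_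
    have hb : BddAbove ((fun z : ℂ => ‖z‖) '' spectrum ℂ M) :=
      (spectrum.isCompact M).bddAbove_image continuous_norm.continuousOn
    have : ‖z‖ ≤ specRad M := le_csSup hb ⟨z, hz, rfl⟩
    exact_mod_cast this.trans_lt h
  obtain ⟨r, hr1, hr2⟩ := ENNReal.lt_iff_exists_nnreal_btwn.1 hrad
  have hr2' : (r : ℝ) < 1 := by exact_mod_cast hr2
  have hG := spectrum.pow_nnnorm_pow_one_div_tendsto_nhds_spectralRadius M
  refine (matrix_tendsto_zero_iff _).2 ?_
  refine squeeze_zero' (.of_forall fun _ => norm_nonneg _) ?_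
    (tendsto_pow_atTop_nhds_zero_of_lt_one r.2 hr2')
  filter_upwards [hG.eventually_lt_const hr1, eventually_gt_atTop 0] with k hk hk0
  have hk1 : ((‖M ^ k‖₊ : ENNReal) ^ (1 / k : ℝ)) ^ k ≤ (r : ENNReal) ^ k := by gcongr
  rw [← ENNReal.rpow_natCast, ← ENNReal.rpow_mul, one_div_mul_cancel (by positivity),
    ENNReal.rpow_one] at hk1
  exact_mod_cast hk1

/-- Since the spectral radius is attained at an eigenvalue `z` and `|z ^ k| ≤ ‖M ^ k‖`, powers
tending to zero force spectral radius `< 1`. -/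
lemma specRad_lt_one_of_tendsto_pow {n : Type*} [Fintype n] [DecidableEq n] [Nonempty n]
    (M : Matrix n n ℂ) (h : Tendsto (fun k : ℕ => M ^ k) atTop (nhds 0)) :
    specRad M < 1 := by
  have hc : IsCompact ((fun z : ℂ => ‖z‖) '' spectrum ℂ M) :=
    (spectrum.isCompact M).image continuous_norm
  obtain ⟨z, hz, hzM⟩ := hc.sSup_mem ((spectrum.nonempty M).image _)
  change ‖z‖ = specRad M at hzM
  rw [← hzM]
  have h0 := ((matrix_tendsto_zero_iff _).1 h).mul_const ‖(1 : Matrix n n ℂ)‖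
  rw [zero_mul] at h0
  obtain ⟨k, hk⟩ := (h0.eventually_lt_const one_pos).exists
  have hle : ‖z ^ k‖ < 1 :=
    (spectrum.norm_le_norm_mul_of_mem (spectrum.pow_mem_pow M k hz)).trans_lt hk
  rw [norm_pow] at hle
  by_contra! hz1
  exact absurd hle (not_lt.2 (one_le_pow₀ hz1))

end Gelfand

lemma norm_rcToComplex {𝕜 : Type*} [RCLike 𝕜] (z : 𝕜) : ‖rcToComplex 𝕜 z‖ = ‖z‖ := by
  rw [← sq_eq_sq₀ (norm_nonneg _) (norm_nonneg _), Complex.sq_norm, RCLike.norm_sq_eq_def,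
    Complex.normSq_apply]
  rfl

lemma specRadK_lt_one_iff {𝕜 : Type*} [RCLike 𝕜] {n : Type*} [Fintype n] [DecidableEq n]
    [Nonempty n] (M : Matrix n n 𝕜) :
    specRadK M < 1 ↔ Tendsto (fun k : ℕ => M ^ k) atTop (nhds 0) := by
  have key : Tendsto (fun k : ℕ => M.map (rcToComplex 𝕜) ^ k) atTop (nhds 0) ↔
      Tendsto (fun k : ℕ => M ^ k) atTop (nhds 0) := by
    simp only [← Matrix.map_pow]
    refine (tendsto_pi_nhds.trans (forall_congr' fun _ => tendsto_pi_nhds)).trans <|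
      Iff.trans ?_ (tendsto_pi_nhds.trans (forall_congr' fun _ => tendsto_pi_nhds)).symm
    refine forall_congr' fun i => forall_congr' fun j => ?_
    refine (tendsto_zero_iff_norm_tendsto_zero (E := ℂ)).trans ?_
    simp only [Matrix.map_apply, norm_rcToComplex]
    exact tendsto_zero_iff_norm_tendsto_zero.symm
  exact ⟨fun h => key.1 (tendsto_pow_of_specRad_lt_one _ h),
    fun h => specRad_lt_one_of_tendsto_pow _ (key.2 h)⟩

/-! ### Dominated triples -/

/-- The Hermitian form of a square matrix, real part: `w ↦ Re (w^* S w)`. -/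
def reForm {𝕜 : Type*} [RCLike 𝕜] {n : Type*} [Fintype n] (S : Matrix n n 𝕜) (w : n → 𝕜) : ℝ :=
  RCLike.re (star w ⬝ᵥ S *ᵥ w)

/-- The triple `(π, m, S)` is dominated when `|w^* m|² ≤ π · Re (w^* S w)` for all `w`, with both
factors nonnegative. It abstracts the mass, the unnormalized first moment and the unnormalized
second moment of a random vector restricted to an event, and the inequality is Cauchy–Schwarz. -/
def Dominated {𝕜 : Type*} [RCLike 𝕜] {n : Type*} [Fintype n] (π : ℝ) (m : n → 𝕜)
    (S : Matrix n n 𝕜) : Prop :=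
  0 ≤ π ∧ ∀ w, 0 ≤ reForm S w ∧ ‖star w ⬝ᵥ m‖ ^ 2 ≤ π * reForm S w

section Dominated

variable {𝕜 : Type*} [RCLike 𝕜] {n : Type*} [Fintype n]

lemma reForm_add (S T : Matrix n n 𝕜) (w : n → 𝕜) :
    reForm (S + T) w = reForm S w + reForm T w := by
  simp [reForm, Matrix.add_mulVec, dotProduct_add]

lemma reForm_smul (c : ℝ) (S : Matrix n n 𝕜) (w : n → 𝕜) :
    reForm ((c : 𝕜) • S) w = c * reForm S w := by
  rw [reForm, reForm, Matrix.smul_mulVec, dotProduct_smul, smul_eq_mul, RCLike.re_ofReal_mul]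

lemma dominated_zero : Dominated 0 (0 : n → 𝕜) 0 := by
  simp [Dominated, reForm]

lemma dominated_vecMulVec (m : n → 𝕜) : Dominated 1 m (vecMulVec m (star m)) := by
  have h (w : n → 𝕜) : reForm (vecMulVec m (star m)) w = ‖star w ⬝ᵥ m‖ ^ 2 := by
    have h1 : star w ⬝ᵥ vecMulVec m (star m) *ᵥ w = (star w ⬝ᵥ m) * star (star w ⬝ᵥ m) := by
      rw [vecMulVec_mulVec, dotProduct_smul, star_dotProduct m w, op_smul_eq_mul]
    rw [reForm, h1]
    rw [RCLike.star_def, RCLike.mul_conj, ← RCLike.ofReal_pow, RCLike.ofReal_re]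
  exact ⟨zero_le_one, fun w => by rw [h]; constructor <;> simp⟩

/-- The inequality behind this is
`|a + b|² ≤ (π₁ + π₂) (q₁ + q₂)` whenever `|a|² ≤ π₁ q₁` and `|b|² ≤ π₂ q₂`. -/
lemma Dominated.add {π π' : ℝ} {m m' : n → 𝕜} {S S' : Matrix n n 𝕜}
    (h : Dominated π m S) (h' : Dominated π' m' S') :
    Dominated (π + π') (m + m') (S + S') := by
  refine ⟨add_nonneg h.1 h'.1, fun w => ?_⟩
  obtain ⟨a0, a1⟩ := h.2 w
  obtain ⟨b0, b1⟩ := h'.2 w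
  rw [reForm_add, dotProduct_add]
  refine ⟨add_nonneg a0 b0, ?_⟩
  have hCS := Finset.sum_sq_le_sum_mul_sum_of_sq_le_mul (Finset.univ : Finset (Fin 2))
    (r := ![‖star w ⬝ᵥ m‖, ‖star w ⬝ᵥ m'‖]) (f := ![π, π']) (g := ![reForm S w, reForm S' w])
    (by simp [Fin.forall_fin_two, h.1, h'.1]) (by simp [Fin.forall_fin_two, a0, b0])
    (by simp [Fin.forall_fin_two, a1, b1])
  simp only [Fin.sum_univ_two, Matrix.cons_val_zero, Matrix.cons_val_one] at hCS
  exact (by gcongr; exact norm_add_le _ _ : _ ≤ _).trans hCS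

lemma Dominated.smul {π : ℝ} {m : n → 𝕜} {S : Matrix n n 𝕜} (h : Dominated π m S)
    {c : ℝ} (hc : 0 ≤ c) : Dominated (c * π) ((c : 𝕜) • m) ((c : 𝕜) • S) := by
  refine ⟨mul_nonneg hc h.1, fun w => ?_⟩
  obtain ⟨a0, a1⟩ := h.2 w
  rw [reForm_smul, dotProduct_smul, norm_smul, RCLike.norm_ofReal, abs_of_nonneg hc, mul_pow]
  exact ⟨mul_nonneg hc a0, by nlinarith [mul_le_mul_of_nonneg_left a1 (sq_nonneg c)]⟩

lemma Dominated.sum {ι : Type*} (s : Finset ι) {π : ι → ℝ} {m : ι → n → 𝕜}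
    {S : ι → Matrix n n 𝕜} (h : ∀ i, Dominated (π i) (m i) (S i)) :
    Dominated (∑ i ∈ s, π i) (∑ i ∈ s, m i) (∑ i ∈ s, S i) := by
  classical
  induction s using Finset.induction_on with
  | empty => simpa using dominated_zero
  | insert a s ha ih =>
    rw [Finset.sum_insert ha, Finset.sum_insert ha, Finset.sum_insert ha]
    exact (h a).add ih

/-- A linear map `G` sends the moments `(π, m, S)` to `(π, G m, G S G^*)`. -/
lemma Dominated.congr {π : ℝ} {m : n → 𝕜} {S : Matrix n n 𝕜} (h : Dominated π m S)
    (G : Matrix n n 𝕜) : Dominated π (G *ᵥ m) (G * S * Gᴴ) := by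
  refine ⟨h.1, fun w => ?_⟩
  have hG : star (Gᴴ *ᵥ w) = star w ᵥ* G := by
    rw [star_mulVec, conjTranspose_conjTranspose]
  obtain ⟨a0, a1⟩ := h.2 (Gᴴ *ᵥ w)
  have hS : reForm (G * S * Gᴴ) w = reForm S (Gᴴ *ᵥ w) := by
    rw [reForm, reForm, hG, ← Matrix.mulVec_mulVec, ← Matrix.mulVec_mulVec,
      Matrix.dotProduct_mulVec (star w) G]
  rw [hS, Matrix.dotProduct_mulVec, ← hG]
  exact ⟨a0, a1⟩

/-- Testing against a basis vector bounds each entry of `m` by a diagonal entry of `S`. -/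
lemma Dominated.norm_sq_le [DecidableEq n] {π : ℝ} {m : n → 𝕜} {S : Matrix n n 𝕜}
    (h : Dominated π m S) (r : n) : ‖m r‖ ^ 2 ≤ π * ‖S r r‖ := by
  have h1 := (h.2 (Pi.single r 1)).2
  rw [reForm, ← Pi.single_star, star_one, single_one_dotProduct, single_one_dotProduct,
    Matrix.mulVec_single_one, Matrix.col_apply] at h1
  exact h1.trans (mul_le_mul_of_nonneg_left (RCLike.re_le_norm _) h.1)

end Dominated

/-! ### The moment recursions -/

section Recursion

variable {𝕜 : Type*} [RCLike 𝕜] {N nx nu : ℕ}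

/-- The first-moment operator, whose matrix under `vec²` is `Ψ`. -/
def Eop (A : Matrix (Fin nx) (Fin nx) 𝕜) (B : Matrix (Fin nx) (Fin nu) 𝕜)
    (K : Fin N → Matrix (Fin nu) (Fin nx) 𝕜) (p : Fin N → Fin N → ℝ) (νh : Fin N → ℝ)
    (m : Fin N → Fin N → (Fin nx → 𝕜)) (i j : Fin N) : Fin nx → 𝕜 :=
  ((p i j : ℝ) : 𝕜) • (Matrix.mulVec A (∑ ℓ, m ℓ i)
    + ((νh i : ℝ) : 𝕜) • Matrix.mulVec B (∑ ℓ, Matrix.mulVec (K ℓ) (m ℓ i)))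

/-- The mass operator `π ↦ [p_{ij} Σ_ℓ π_{ℓi}]`, the evolution of the joint law of two successive
states of the chain. -/
def massOp (p : Fin N → Fin N → ℝ) (π : Fin N → Fin N → ℝ) (i j : Fin N) : ℝ :=
  p i j * ∑ ℓ, π ℓ i

/-- `L` averages the closed-loop congruence by `A + B K_ℓ` (weight `ν̂_i`) and the open-loop
congruence by `A` (weight `1 - ν̂_i`). -/
lemma Lop_eq (A : Matrix (Fin nx) (Fin nx) 𝕜) (B : Matrix (Fin nx) (Fin nu) 𝕜)
    (K : Fin N → Matrix (Fin nu) (Fin nx) 𝕜) (p : Fin N → Fin N → ℝ) (νh : Fin N → ℝ)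
    (S : Fin N → Fin N → Matrix (Fin nx) (Fin nx) 𝕜) (i j : Fin N) :
    Lop A B K p νh S i j = ((p i j : ℝ) : 𝕜) • ∑ ℓ,
      (((νh i : ℝ) : 𝕜) • ((A + B * K ℓ) * S ℓ i * (A + B * K ℓ)ᴴ)
        + ((1 - νh i : ℝ) : 𝕜) • (A * S ℓ i * Aᴴ)) := by
  rw [Lop]
  congr 1
  simp only [Matrix.mul_sum, Matrix.sum_mul, Finset.smul_sum, ← Finset.sum_add_distrib]
  refine Finset.sum_congr rfl fun ℓ _ => ?_
  simp only [conjTranspose_add, conjTranspose_mul, Matrix.add_mul, Matrix.mul_add,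
    Matrix.mul_assoc, RCLike.ofReal_sub, RCLike.ofReal_one]
  module

lemma Eop_eq (A : Matrix (Fin nx) (Fin nx) 𝕜) (B : Matrix (Fin nx) (Fin nu) 𝕜)
    (K : Fin N → Matrix (Fin nu) (Fin nx) 𝕜) (p : Fin N → Fin N → ℝ) (νh : Fin N → ℝ)
    (m : Fin N → Fin N → (Fin nx → 𝕜)) (i j : Fin N) :
    Eop A B K p νh m i j = ((p i j : ℝ) : 𝕜) • ∑ ℓ,
      (((νh i : ℝ) : 𝕜) • ((A + B * K ℓ) *ᵥ m ℓ i)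
        + ((1 - νh i : ℝ) : 𝕜) • (A *ᵥ m ℓ i)) := by
  rw [Eop]
  congr 1
  simp only [Matrix.mulVec_sum, Finset.smul_sum, ← Finset.sum_add_distrib]
  refine Finset.sum_congr rfl fun ℓ _ => ?_
  simp only [Matrix.add_mulVec, Matrix.mulVec_mulVec, RCLike.ofReal_sub, RCLike.ofReal_one]
  module

lemma dominated_step (A : Matrix (Fin nx) (Fin nx) 𝕜) (B : Matrix (Fin nx) (Fin nu) 𝕜)
    (K : Fin N → Matrix (Fin nu) (Fin nx) 𝕜) (p : Fin N → Fin N → ℝ)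
    (hp_nonneg : ∀ i j, 0 ≤ p i j)
    (νh : Fin N → ℝ) (hνh : ∀ i, νh i ∈ Set.Icc (0 : ℝ) 1)
    {π : Fin N → Fin N → ℝ} {m : Fin N → Fin N → (Fin nx → 𝕜)}
    {S : Fin N → Fin N → Matrix (Fin nx) (Fin nx) 𝕜}
    (h : ∀ ℓ i, Dominated (π ℓ i) (m ℓ i) (S ℓ i)) (i j : Fin N) :
    Dominated (massOp p π i j) (Eop A B K p νh m i j) (Lop A B K p νh S i j) := by
  rw [Lop_eq, Eop_eq, massOp]
  refine Dominated.smul ?_ (hp_nonneg i j)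
  have hπ : ∑ ℓ, π ℓ i = ∑ ℓ, (νh i * π ℓ i + (1 - νh i) * π ℓ i) :=
    Finset.sum_congr rfl fun ℓ _ => by ring
  rw [hπ]
  exact Dominated.sum _ fun ℓ => (((h ℓ i).congr _).smul (hνh i).1).add
    (((h ℓ i).congr _).smul (sub_nonneg.2 (hνh i).2))

/-- Row-stochasticity is what makes the total mass an invariant. -/
lemma sum_massOp (p : Fin N → Fin N → ℝ) (hp_row : ∀ i, ∑ j, p i j = 1)
    (π : Fin N → Fin N → ℝ) :
    ∑ i, ∑ j, massOp p π i j = ∑ i, ∑ j, π i j := by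
  simp only [massOp, ← Finset.sum_mul, hp_row, one_mul]
  exact Finset.sum_comm

lemma vec2_iterate (f : (Fin N → Fin N → Matrix (Fin nx) (Fin nx) 𝕜) →
      Fin N → Fin N → Matrix (Fin nx) (Fin nx) 𝕜)
    (Λ : Matrix ((Fin N × Fin N) × Fin nx × Fin nx) ((Fin N × Fin N) × Fin nx × Fin nx) 𝕜)
    (h : ∀ S, vec2 (f S) = Λ *ᵥ vec2 S) (k : ℕ)
    (S : Fin N → Fin N → Matrix (Fin nx) (Fin nx) 𝕜) :
    vec2 (f^[k] S) = (Λ ^ k) *ᵥ vec2 S := by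
  induction k with
  | zero => simp
  | succ k ih => rw [Function.iterate_succ_apply', h, ih, pow_succ', Matrix.mulVec_mulVec]

lemma vec2v_iterate (f : (Fin N → Fin N → (Fin nx → 𝕜)) → Fin N → Fin N → (Fin nx → 𝕜))
    (Ψ : Matrix ((Fin N × Fin N) × Fin nx) ((Fin N × Fin N) × Fin nx) 𝕜)
    (h : ∀ m, vec2v (f m) = Ψ *ᵥ vec2v m) (k : ℕ) (m : Fin N → Fin N → (Fin nx → 𝕜)) :
    vec2v (f^[k] m) = (Ψ ^ k) *ᵥ vec2v m := by
  induction k with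
  | zero => simp
  | succ k ih => rw [Function.iterate_succ_apply', h, ih, pow_succ', Matrix.mulVec_mulVec]

/-- Starting from the rank-one second moments `m_{ℓi} m_{ℓi}^*` with unit masses, domination
propagates, and the masses stay bounded by their conserved total `N²`. -/
lemma norm_sq_iterate_le (A : Matrix (Fin nx) (Fin nx) 𝕜) (B : Matrix (Fin nx) (Fin nu) 𝕜)
    (K : Fin N → Matrix (Fin nu) (Fin nx) 𝕜) (p : Fin N → Fin N → ℝ)
    (hp_nonneg : ∀ i j, 0 ≤ p i j) (hp_row : ∀ i, ∑ j, p i j = 1)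
    (νh : Fin N → ℝ) (hνh : ∀ i, νh i ∈ Set.Icc (0 : ℝ) 1)
    (m : Fin N → Fin N → (Fin nx → 𝕜)) (k : ℕ) (i j : Fin N) (r : Fin nx) :
    ‖((Eop A B K p νh)^[k] m) i j r‖ ^ 2 ≤
      (N : ℝ) ^ 2 *
        ‖((Lop A B K p νh)^[k] fun a b => vecMulVec (m a b) (star (m a b))) i j r r‖ := by
  have hdom : ∀ i j, Dominated (((massOp p)^[k] fun _ _ => 1) i j)
      (((Eop A B K p νh)^[k] m) i j)
      (((Lop A B K p νh)^[k] fun a b => vecMulVec (m a b) (star (m a b))) i j) := by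
    induction k with
    | zero => exact fun i j => dominated_vecMulVec _
    | succ k ih =>
      simp only [Function.iterate_succ_apply']
      exact dominated_step A B K p hp_nonneg νh hνh ih
  have htot : ∑ i, ∑ j, ((massOp p)^[k] fun _ _ => 1) i j = (N : ℝ) ^ 2 := by
    clear hdom
    induction k with
    | zero => simp [sq]
    | succ k ih => rw [Function.iterate_succ_apply', sum_massOp p hp_row, ih]
  have hle : ((massOp p)^[k] fun _ _ => 1) i j ≤ (N : ℝ) ^ 2 := by
    rw [← htot]
    exact (Finset.single_le_sum (fun b _ => (hdom i b).1) (Finset.mem_univ j)).trans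
      (Finset.single_le_sum (f := fun a => ∑ b, ((massOp p)^[k] fun _ _ => 1) a b)
        (fun a _ => Finset.sum_nonneg fun b _ => (hdom a b).1) (Finset.mem_univ i))
  exact ((hdom i j).norm_sq_le r).trans (mul_le_mul_of_nonneg_right hle (norm_nonneg _))

end Recursion

/-- `ρ(Λ) < 1` implies `ρ(Ψ) < 1`. -/
theorem specRad_Lambda_lt_one_implies_specRad_Psi_lt_one
    {𝕜 : Type*} [RCLike 𝕜]
    {N nx nu : ℕ} (hN : 1 ≤ N) (hnx : 1 ≤ nx) (hnu : 1 ≤ nu)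
    (A : Matrix (Fin nx) (Fin nx) 𝕜) (B : Matrix (Fin nx) (Fin nu) 𝕜)
    (K : Fin N → Matrix (Fin nu) (Fin nx) 𝕜)
    (p : Fin N → Fin N → ℝ) (hp_nonneg : ∀ i j, 0 ≤ p i j) (hp_row : ∀ i, ∑ j, p i j = 1)
    (νh : Fin N → ℝ) (hνh : ∀ i, νh i ∈ Set.Icc (0 : ℝ) 1)
    (Λ : Matrix ((Fin N × Fin N) × Fin nx × Fin nx) ((Fin N × Fin N) × Fin nx × Fin nx) 𝕜)
    (hΛ : ∀ S : Fin N → Fin N → Matrix (Fin nx) (Fin nx) 𝕜,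
      vec2 (Lop A B K p νh S) = Matrix.mulVec Λ (vec2 S))
    (Ψ : Matrix ((Fin N × Fin N) × Fin nx) ((Fin N × Fin N) × Fin nx) 𝕜)
    (hΨ : ∀ m : Fin N → Fin N → (Fin nx → 𝕜),
      vec2v (fun i j => ((p i j : ℝ) : 𝕜) •
          (Matrix.mulVec A (∑ ℓ, m ℓ i)
            + ((νh i : ℝ) : 𝕜) • Matrix.mulVec B (∑ ℓ, Matrix.mulVec (K ℓ) (m ℓ i))))
        = Matrix.mulVec Ψ (vec2v m)) :
    specRadK Λ < 1 → specRadK Ψ < 1 := by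
  have : Nonempty (Fin N) := ⟨⟨0, hN⟩⟩
  have : Nonempty (Fin nx) := ⟨⟨0, hnx⟩⟩
  rw [specRadK_lt_one_iff, specRadK_lt_one_iff]
  intro hΛ0
  have hE (m : Fin N → Fin N → (Fin nx → 𝕜)) (i j : Fin N) (r : Fin nx) :
      Tendsto (fun k => ((Eop A B K p νh)^[k] m) i j r) atTop (nhds 0) := by
    set S₀ : Fin N → Fin N → Matrix (Fin nx) (Fin nx) 𝕜 :=
      fun a b => vecMulVec (m a b) (star (m a b)) with hS₀
    have hvec : Tendsto (fun k => (Λ ^ k) *ᵥ vec2 S₀) atTop (nhds 0) := by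
      have hc : Continuous fun M : Matrix ((Fin N × Fin N) × Fin nx × Fin nx)
          ((Fin N × Fin N) × Fin nx × Fin nx) 𝕜 => M *ᵥ vec2 S₀ := by fun_prop
      have h := (hc.tendsto 0).comp hΛ0
      rwa [Matrix.zero_mulVec] at h
    have hS : Tendsto (fun k => ((Lop A B K p νh)^[k] S₀) i j r r) atTop (nhds 0) := by
      have h := tendsto_pi_nhds.1 hvec ((j, i), r, r)
      simp only [← vec2_iterate _ Λ hΛ] at h
      exact h
    have hsq : Tendsto (fun k => ‖((Eop A B K p νh)^[k] m) i j r‖ ^ 2) atTop (nhds 0) :=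
      squeeze_zero (fun _ => sq_nonneg _)
        (fun k => norm_sq_iterate_le A B K p hp_nonneg hp_row νh hνh m k i j r)
        (by simpa using (tendsto_zero_iff_norm_tendsto_zero.1 hS).const_mul ((N : ℝ) ^ 2))
    rw [tendsto_zero_iff_norm_tendsto_zero]
    simpa using hsq.sqrt
  -- The columns of `Ψ ^ k` are the iterates of the first-moment recursion from basis vectors.
  refine tendsto_pi_nhds.2 fun a => tendsto_pi_nhds.2 fun b => ?_
  have h := hE (fun ℓ i r => Pi.single (M := fun _ => 𝕜) b 1 ((i, ℓ), r)) a.1.2 a.1.1 a.2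
  refine h.congr fun k => ?_
  have h1 := congrFun (vec2v_iterate (Eop A B K p νh) Ψ hΨ k
    (fun ℓ i r => Pi.single (M := fun _ => 𝕜) b 1 ((i, ℓ), r))) a
  refine h1.trans ?_
  change ((Ψ ^ k) *ᵥ Pi.single b 1) a = _
  rw [Matrix.mulVec_single_one, Matrix.col_apply]
end
end
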